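/- arXiv:2007.07473 — 2 statements merged into one kernel-verified Lean document; each statement's English description precedes it below -/
import Mathlib

section
/- For Re(s) < 1, the Laplace transform of t times the LUE density satisfies ∫_0^∞ t ρ_{(1)}^{(L)}(t) e^{st} dt = (N(N+a)/(1-s)^{2N+a}) ₂F₁(-N+1-a, -N+1, 2; s²). -/
open Real MeasureTheory Finset

/-- Generalized Laguerre polynomial via the Rodrigues formula. -/
noncomputable def lagL (a : ℝ) (n : ℕ) (x : ℝ) : ℝ :=
  x ^ (-a) * Real.exp x / (n.factorial : ℝ) *
    iteratedDeriv n (fun t : ℝ => Real.exp (-t) * t ^ ((n : ℝ) + a)) x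

/-- Laguerre orthogonal function `ψ_n^{(L)}`. -/
noncomputable def psiL (a : ℝ) (n : ℕ) (x : ℝ) : ℝ :=
  Real.sqrt (x ^ a * Real.exp (-x)) * ((n.factorial : ℝ) * (-1) ^ n * lagL a n x)

/-- Laguerre norm `h_n^{(L)} = Γ(n+1)Γ(n+a+1)`. -/
noncomputable def hL (a : ℝ) (n : ℕ) : ℝ := Real.Gamma (n + 1) * Real.Gamma (n + a + 1)

/-- Eigenvalue density of the LUE (diagonal Christoffel–Darboux kernel). -/
noncomputable def rhoLUE (a : ℝ) (N : ℕ) (t : ℝ) : ℝ :=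
  ∑ j ∈ Finset.range N, psiL a j t ^ 2 / hL a j

/-- Rising factorial (Pochhammer symbol) `(c)_n` for a real `c`. -/
noncomputable def poch (c : ℝ) (n : ℕ) : ℝ := ∏ i ∈ Finset.range n, (c + i)

/-- Terminating Gauss hypergeometric polynomial `₂F₁(-n, b, c; z)`. -/
noncomputable def hypF (n : ℕ) (b c z : ℝ) : ℝ :=
  ∑ m ∈ Finset.range (n + 1),
    poch (-(n : ℝ)) m * poch b m / (poch c m * (m.factorial : ℝ)) * z ^ m

open Polynomial in
noncomputable def lP (a : ℝ) (n : ℕ) : ℝ[X] :=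
  ∑ k ∈ Finset.range (n + 1), ((-1 : ℝ) ^ k * (n.choose k : ℝ) / Real.Gamma (a + k + 1)) • (X : ℝ[X]) ^ k

open Polynomial in
noncomputable def PhiL (a p : ℝ) : ℝ[X] →ₗ[ℝ] ℝ :=
  Polynomial.lsum (fun k => (Real.Gamma (a + k + 1) * p ^ (-(a + k + 1))) • (LinearMap.id : ℝ →ₗ[ℝ] ℝ))

open Polynomial in
lemma PhiL_C_mul (a p c : ℝ) (k : ℕ) :
    PhiL a p (C c * X ^ k) = c * (Real.Gamma (a + k + 1) * p ^ (-(a + k + 1))) := by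
  rw [Polynomial.C_mul_X_pow_eq_monomial]
  simp [PhiL, Polynomial.lsum, Polynomial.sum_monomial_index]
  ring

open Polynomial in
lemma PhiL_X_pow (a p : ℝ) (k : ℕ) :
    PhiL a p (X ^ k) = (Real.Gamma (a + k + 1) * p ^ (-(a + k + 1))) := by
  simpa using PhiL_C_mul a p 1 k

open Polynomial in
lemma PhiL_integral (a p : ℝ) (ha : -1 < a) (hp : 0 < p) (P : ℝ[X]) :
    IntegrableOn (fun t : ℝ => t ^ a * Real.exp (-(p * t)) * P.eval t) (Set.Ioi 0) ∧
    ∫ t in Set.Ioi (0 : ℝ), t ^ a * Real.exp (-(p * t)) * P.eval t = PhiL a p P := by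
  induction P using Polynomial.induction_on' with
  | add P Q hP hQ =>
    simp only [Polynomial.eval_add, mul_add, map_add]
    exact ⟨hP.1.add hQ.1, by rw [integral_add hP.1 hQ.1, hP.2, hQ.2]⟩
  | monomial k c =>
    have hk : -1 < a + k := by have : (0:ℝ) ≤ k := Nat.cast_nonneg k
                               linarith
    have e : Set.EqOn (fun t : ℝ => t ^ a * Real.exp (-(p * t)) * (Polynomial.monomial k c).eval t)
      (fun t : ℝ => c * (t ^ ((a + k + 1) - 1) * Real.exp (-(p * t)))) (Set.Ioi 0) := by
      intro t ht
      have ht : 0 < t := ht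
      simp only [Polynomial.eval_monomial]
      rw [add_sub_cancel_right, Real.rpow_add ht, Real.rpow_natCast]
      ring
    have hi := integrableOn_rpow_mul_exp_neg_mul_rpow hk one_pos hp
    constructor
    · rw [integrableOn_congr_fun e measurableSet_Ioi]
      apply Integrable.const_mul
      have hi2 : Integrable (fun x : ℝ => x ^ (a + k) * Real.exp (-p * x ^ (1:ℝ))) (volume.restrict (Set.Ioi 0)) := hi
      simpa using hi2
    · rw [setIntegral_congr_fun measurableSet_Ioi e, integral_const_mul,
        Real.integral_rpow_mul_exp_neg_mul_Ioi (by linarith) hp, ← Polynomial.C_mul_X_pow_eq_monomial,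
        PhiL_C_mul, one_div, Real.inv_rpow hp.le, Real.rpow_neg hp.le]
      ring

open Polynomial in
lemma PhiL_deriv (a p : ℝ) (hp : 0 < p) (ha : -1 < a) (P : ℝ[X]) :
    HasDerivAt (fun p => PhiL a p P) (-PhiL a p (X * P)) p := by
  induction P using Polynomial.induction_on' with
  | add P Q hP hQ =>
    simp only [mul_add, map_add, neg_add]
    exact hP.add hQ
  | monomial k c =>
    have e : (X : ℝ[X]) * Polynomial.monomial k c = C c * X ^ (k + 1) := by
      rw [← Polynomial.C_mul_X_pow_eq_monomial]; ring
    rw [e, ← Polynomial.C_mul_X_pow_eq_monomial]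
    simp only [PhiL_C_mul]
    have hk : (0:ℝ) ≤ k := Nat.cast_nonneg k
    have h := ((Real.hasDerivAt_rpow_const (p := -(a + k + 1)) (Or.inl hp.ne')).const_mul
      (Real.Gamma (a + k + 1))).const_mul c
    refine h.congr_deriv ?_
    push_cast
    rw [show a + (k + 1 : ℝ) + 1 = (a + k + 1) + 1 by ring, Real.Gamma_add_one (s := a + k + 1) (by linarith),
      show -(a + k + 1 + 1) = -(a + k + 1) - 1 by ring]
    ring

open Polynomial in
lemma PhiL_scale (a p : ℝ) (hp : 0 < p) (P : ℝ[X]) :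
    PhiL a p P = p ^ (-(a + 1)) * PhiL a 1 (P.comp (C p⁻¹ * X)) := by
  induction P using Polynomial.induction_on' with
  | add P Q hP hQ =>
    simp only [Polynomial.add_comp, map_add, hP, hQ, mul_add]
  | monomial k c =>
    rw [Polynomial.monomial_comp, mul_pow, ← mul_assoc, ← C_pow, ← C_mul, PhiL_C_mul,
      ← Polynomial.C_mul_X_pow_eq_monomial, PhiL_C_mul, Real.one_rpow,
      show -(a + k + 1) = -(a + 1) - k by ring, Real.rpow_sub hp, Real.rpow_natCast, inv_pow]
    ring

open Polynomial in
lemma lP_scale (a c : ℝ) (n : ℕ) :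
    (lP a n).comp (C c * X) =
      ∑ k ∈ Finset.range (n + 1), ((n.choose k : ℝ) * c ^ k * (1 - c) ^ (n - k)) • lP a k := by
  have h1 : ∀ k ∈ Finset.range (n + 1), lP a k = ∑ j ∈ Finset.range (n + 1),
      ((-1 : ℝ) ^ j * (k.choose j : ℝ) / Real.Gamma (a + j + 1)) • (X : ℝ[X]) ^ j := by
    intro k hk
    unfold lP
    apply Finset.sum_subset
    · intro j hj; simp at *; omega
    · intro j _ hj
      rw [Nat.choose_eq_zero_of_lt (by simp at hj; omega)]; simp
  rw [Finset.sum_congr rfl (fun k hk => by rw [h1 k hk])]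
  simp only [Finset.smul_sum, smul_smul]
  rw [Finset.sum_comm]
  simp only [← Finset.sum_smul]
  rw [h1 n (by simp), Polynomial.sum_comp]
  apply Finset.sum_congr rfl
  intro j hj
  have hj : j ≤ n := by simp at hj; omega
  rw [Polynomial.smul_comp, Polynomial.X_pow_comp, mul_pow, ← C_pow, ← Polynomial.smul_eq_C_mul, smul_smul]
  congr 1
  have h2 : ∑ k ∈ Finset.range (n + 1), (n.choose k : ℝ) * c ^ k * (1 - c) ^ (n - k) * (k.choose j : ℝ)
      = (n.choose j : ℝ) * c ^ j := by
    obtain ⟨d, rfl⟩ := Nat.exists_eq_add_of_le hj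
    rw [show j + d + 1 = j + (d + 1) by ring, Finset.sum_range_add]
    rw [Finset.sum_eq_zero (s := Finset.range j), zero_add]
    · have h3 : ∀ i ∈ Finset.range (d + 1), ((j + d).choose (j + i) : ℝ) * c ^ (j + i) * (1 - c) ^ (j + d - (j + i)) * ((j + i).choose j : ℝ)
        = ((j + d).choose j * c ^ j) * (c ^ i * (1 - c) ^ (d - i) * (d.choose i : ℝ)) := by
        intro i hi
        have hi : i ≤ d := by simp at hi; omega
        have h4 := Nat.choose_mul (n := j + d) (k := j + i) (s := j) (by omega)
        have h5 : (((j + d).choose (j + i) : ℝ)) * ((j + i).choose j : ℝ) = (j + d).choose j * d.choose i := by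
          have := congrArg (Nat.cast (R := ℝ)) h4
          push_cast at this
          rw [this]; congr 2 <;> simp
        rw [show j + d - (j + i) = d - i by omega, pow_add]
        linear_combination (c ^ j * c ^ i * (1 - c) ^ (d - i)) * h5
      rw [Finset.sum_congr rfl h3, ← Finset.mul_sum, ← add_pow]
      simp
    · intro k hk
      rw [Nat.choose_eq_zero_of_lt (n := k) (k := j) (by simpa using hk)]; simp
  calc _ = ((-1 : ℝ) ^ j / Real.Gamma (a + j + 1)) * ((n.choose j : ℝ) * c ^ j) := by ring
    _ = _ := by
      rw [← h2, Finset.mul_sum]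
      apply Finset.sum_congr rfl
      intros; ring

lemma Gamma_asc (b : ℝ) (hb : 0 < b) (j : ℕ) :
    Real.Gamma (b + j) = Real.Gamma b * (ascPochhammer ℝ j).eval b := by
  induction j with
  | zero => simp
  | succ j ih =>
    have : (0:ℝ) ≤ j := Nat.cast_nonneg j
    push_cast
    rw [← add_assoc, Real.Gamma_add_one (by linarith), ih, ascPochhammer_succ_eval]
    ring

open Polynomial in
lemma diff_sum (b : ℝ) (n j : ℕ) (hj : j ≤ n) :
    ∑ k ∈ Finset.range (n + 1), (-1 : ℝ) ^ k * (n.choose k : ℝ) * (ascPochhammer ℝ j).eval (b + k)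
      = if j = n then (-1 : ℝ) ^ n * n.factorial else 0 := by
  have h := fwdDiff_iter_eq_sum_shift (1 : ℝ) (fun x => (ascPochhammer ℝ j).eval x) n b
  have h2 : ∑ k ∈ Finset.range (n + 1), (-1 : ℝ) ^ k * (n.choose k : ℝ) * (ascPochhammer ℝ j).eval (b + k)
     = (-1 : ℝ) ^ n * (fwdDiff (1:ℝ))^[n] (fun x => (ascPochhammer ℝ j).eval x) b := by
    rw [h, Finset.mul_sum]
    apply Finset.sum_congr rfl
    intro k hk
    have hk : k ≤ n := by simp at hk; omega
    obtain ⟨d, rfl⟩ := Nat.exists_eq_add_of_le hk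
    have e : (-1 : ℝ) ^ d * (-1) ^ d = 1 := by rw [← mul_pow]; simp
    simp [pow_add]
    linear_combination (-(-1 : ℝ) ^ k * ((k + d).choose k : ℝ) * (ascPochhammer ℝ j).eval (b + k)) * e
  rw [h2]
  split_ifs with hjn
  · subst hjn
    have := Polynomial.fwdDiff_iter_degree_eq_factorial (ascPochhammer ℝ j)
    rw [ascPochhammer_natDegree, (monic_ascPochhammer ℝ j).leadingCoeff] at this
    have h3 := congrFun this b
    congr 1
    simpa using h3
  · have := Polynomial.fwdDiff_iter_eq_zero_of_degree_lt (P := ascPochhammer ℝ j) (n := n)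
      (by rw [ascPochhammer_natDegree]; omega)
    have h3 := congrFun this b
    rw [show (fwdDiff (1:ℝ))^[n] (fun x => (ascPochhammer ℝ j).eval x) b = 0 from h3, mul_zero]

open Polynomial in
lemma PhiL_X_lP (a : ℝ) (ha : -1 < a) (n j : ℕ) (hj : j ≤ n) :
    PhiL a 1 (X ^ j * lP a n) = if j = n then (-1 : ℝ) ^ n * n.factorial else 0 := by
  rw [← diff_sum (a + 1) n j hj, lP, Finset.mul_sum, map_sum]
  apply Finset.sum_congr rfl
  intro k _
  have : (0:ℝ) ≤ k := Nat.cast_nonneg k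
  have hg : Real.Gamma (a + k + 1) ≠ 0 := (Real.Gamma_pos_of_pos (by linarith)).ne'
  rw [mul_smul_comm, map_smul, ← pow_add, PhiL_X_pow, Real.one_rpow, smul_eq_mul, add_comm j k]
  push_cast
  rw [show a + (k + j : ℝ) + 1 = (a + k + 1) + j by ring, Gamma_asc _ (by linarith),
    show a + 1 + (k:ℝ) = a + k + 1 by ring]
  field_simp

lemma lP_orth (a : ℝ) (ha : -1 < a) (m n : ℕ) (hm : m ≤ n) :
    PhiL a 1 (lP a m * lP a n) = if m = n then n.factorial / Real.Gamma (a + n + 1) else 0 := by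
  have h : PhiL a 1 (lP a m * lP a n) = ∑ j ∈ Finset.range (m + 1),
      ((-1 : ℝ) ^ j * (m.choose j : ℝ) / Real.Gamma (a + j + 1)) * (if j = n then (-1 : ℝ) ^ n * n.factorial else 0) := by
    rw [lP, Finset.sum_mul, map_sum]
    apply Finset.sum_congr rfl
    intro j hj
    rw [smul_mul_assoc, map_smul, PhiL_X_lP a ha n j (by simp at hj; omega), smul_eq_mul]
  rw [h]
  split_ifs with hmn
  · subst hmn
    rw [Finset.sum_range_succ, Finset.sum_eq_zero]
    · simp
      have e : (-1 : ℝ) ^ m * (-1) ^ m = 1 := by rw [← mul_pow]; simp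
      linear_combination (m.factorial / Real.Gamma (a + m + 1)) * e
    · intro j hj
      simp at hj
      rw [if_neg (by omega), mul_zero]
  · apply Finset.sum_eq_zero
    intro j hj
    simp at hj
    rw [if_neg (by omega), mul_zero]

lemma lP_orth' (a : ℝ) (ha : -1 < a) (m n : ℕ) :
    PhiL a 1 (lP a m * lP a n) = if m = n then n.factorial / Real.Gamma (a + n + 1) else 0 := by
  rcases le_total m n with h | h
  · exact lP_orth a ha m n h
  · rw [mul_comm, lP_orth a ha n m h]
    by_cases e : m = n
    · subst e; simp
    · rw [if_neg e, if_neg (Ne.symm e)]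

lemma G_formula (a p : ℝ) (ha : -1 < a) (hp : 0 < p) (n : ℕ) :
    PhiL a p (lP a n * lP a n) = p ^ (-(2 * n + a + 1)) * ∑ k ∈ Finset.range (n + 1),
      (n.choose k : ℝ) ^ 2 * (1 - p) ^ (2 * (n - k)) * (k.factorial / Real.Gamma (a + k + 1)) := by
  rw [PhiL_scale a p hp, Polynomial.mul_comp, lP_scale, Finset.sum_mul_sum, map_sum]
  rw [show -(2 * (n:ℝ) + a + 1) = -(a + 1) - ((2 * n : ℕ) : ℝ) by push_cast; ring, Real.rpow_sub hp,
    Real.rpow_natCast, div_mul_eq_mul_div, mul_div_assoc, Finset.sum_div]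
  congr 1
  apply Finset.sum_congr rfl
  intro k hk
  have hk' : k ≤ n := by simp at hk; omega
  rw [map_sum, Finset.sum_eq_single k]
  · rw [smul_mul_smul_comm, map_smul, lP_orth' a ha, if_pos rfl, smul_eq_mul]
    have hk0 : (0:ℝ) ≤ k := Nat.cast_nonneg k
    obtain ⟨d, rfl⟩ := Nat.exists_eq_add_of_le hk'
    have e : (1 - p⁻¹) = -(1 - p) / p := by field_simp; ring
    have e2 : (-1 : ℝ) ^ d * (-1) ^ d = 1 := by rw [← mul_pow]; simp
    rw [e, show k + d - k = d by omega]
    rw [div_pow, neg_pow]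
    have hg : Real.Gamma (a + k + 1) ≠ 0 := (Real.Gamma_pos_of_pos (by linarith)).ne'
    have e3 : p ^ (2 * (k + d)) = (p ^ k * p ^ d) ^ 2 := by ring
    rw [e3, pow_mul' _ 2 d, inv_pow]
    field_simp
    linear_combination (((k + d).choose k : ℝ) ^ 2 * (1 - p) ^ (2 * d)) * e2
  · intro b _ hb
    rw [smul_mul_smul_comm, map_smul, lP_orth' a ha, if_neg (Ne.symm hb), smul_zero]
  · intro h; exact absurd hk h
noncomputable def qq (a : ℝ) (n m : ℕ) : ℝ :=
  (descPochhammer ℝ m).eval (n : ℝ) * (descPochhammer ℝ m).eval ((n : ℝ) + a) / (m.factorial : ℝ) ^ 2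

noncomputable def ff (a : ℝ) (n m : ℕ) : ℝ := (m + 1) * qq a n (m + 1)

lemma desc_Gamma (a : ℝ) (ha : -1 < a) (k d : ℕ) :
    Real.Gamma (((k + d : ℕ) : ℝ) + a + 1) =
      Real.Gamma (a + k + 1) * (descPochhammer ℝ d).eval (((k + d : ℕ) : ℝ) + a) := by
  have hk0 : (0:ℝ) ≤ k := Nat.cast_nonneg k
  rw [descPochhammer_eval_eq_ascPochhammer]
  push_cast
  rw [show (k:ℝ) + d + a + 1 = (a + k + 1) + d by ring, Gamma_asc _ (by linarith)]
  congr 2; ring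

lemma qq_eq (a : ℝ) (ha : -1 < a) (n m : ℕ) (hm : m ≤ n) :
    Real.Gamma (n + a + 1) / n.factorial * ((n.choose m : ℝ) ^ 2 *
      ((n - m).factorial / Real.Gamma (a + (n - m : ℕ) + 1))) = qq a n m := by
  obtain ⟨k, rfl⟩ := Nat.exists_eq_add_of_le' hm
  have hk0 : (0:ℝ) ≤ k := Nat.cast_nonneg k
  have hg : Real.Gamma (a + k + 1) ≠ 0 := (Real.Gamma_pos_of_pos (by linarith)).ne'
  rw [desc_Gamma a ha k m, Nat.add_sub_cancel, qq, descPochhammer_eval_eq_descFactorial]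
  have h1 : ((k + m).factorial : ℝ) = (k.factorial : ℝ) * ((k + m).descFactorial m : ℝ) := by
    have := Nat.factorial_mul_descFactorial hm
    rw [Nat.add_sub_cancel] at this
    exact_mod_cast this.symm
  have h2 : ((k + m).descFactorial m : ℝ) = (m.factorial : ℝ) * ((k + m).choose m : ℝ) := by
    exact_mod_cast Nat.descFactorial_eq_factorial_mul_choose (k + m) m
  have h3 : ((k + m).choose m : ℝ) ≠ 0 := by
    exact_mod_cast (Nat.choose_pos hm).ne'
  have h4 : (k.factorial : ℝ) ≠ 0 := by exact_mod_cast k.factorial_ne_zero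
  have h5 : (m.factorial : ℝ) ≠ 0 := by exact_mod_cast m.factorial_ne_zero
  rw [h1, h2]
  field_simp

lemma G2 (a p : ℝ) (ha : -1 < a) (hp : 0 < p) (n : ℕ) :
    Real.Gamma (n + a + 1) / n.factorial * PhiL a p (lP a n * lP a n) =
      p ^ (-(2 * n + a + 1)) * ∑ m ∈ Finset.range (n + 1), qq a n m * (1 - p) ^ (2 * m) := by
  rw [G_formula a p ha hp, ← Finset.sum_range_reflect, mul_left_comm, Finset.mul_sum]
  congr 1
  apply Finset.sum_congr rfl
  intro m hm
  have hm : m ≤ n := by simp at hm; omega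
  rw [← qq_eq a ha n m hm, show n + 1 - 1 - m = n - m by omega, Nat.choose_symm hm,
    show n - (n - m) = m by omega]
  ring

lemma qq_top (a : ℝ) (n : ℕ) : qq a n (n + 1) = 0 := by
  rw [qq, descPochhammer_eval_eq_descFactorial, Nat.descFactorial_of_lt (by omega)]
  simp

lemma ff_eq (a : ℝ) (n m : ℕ) : ff a n m = qq a n m * ((n - m) * (n + a - m)) / (m + 1) := by
  have h5 : (m.factorial : ℝ) ≠ 0 := by exact_mod_cast m.factorial_ne_zero
  have h6 : (m : ℝ) + 1 ≠ 0 := by positivity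
  rw [ff, qq, qq, descPochhammer_succ_eval, descPochhammer_succ_eval, Nat.factorial_succ]
  push_cast
  field_simp

lemma desc_succ_left (x : ℝ) (m : ℕ) :
    (descPochhammer ℝ (m + 1)).eval (x + 1) = (x + 1) * (descPochhammer ℝ m).eval x := by
  rw [descPochhammer_succ_left]
  simp

lemma ff_succ (a : ℝ) (n m : ℕ) : ff a (n + 1) m = qq a n m * ((n + 1) * (n + 1 + a)) / (m + 1) := by
  have h5 : (m.factorial : ℝ) ≠ 0 := by exact_mod_cast m.factorial_ne_zero
  have h6 : (m : ℝ) + 1 ≠ 0 := by positivity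
  rw [ff, qq, qq]
  push_cast
  rw [show (n : ℝ) + 1 + a = (n + a) + 1 by ring, desc_succ_left, desc_succ_left, Nat.factorial_succ]
  push_cast
  field_simp

lemma ff_rec (a : ℝ) (n m : ℕ) :
    ff a (n + 1) m = (2 * n + a + 1) * qq a n m + ff a n m - m * qq a n m := by
  have h6 : (m : ℝ) + 1 ≠ 0 := by positivity
  rw [ff_succ, ff_eq]
  field_simp
  ring

noncomputable def FF (a s : ℝ) (n : ℕ) : ℝ := ∑ m ∈ Finset.range n, ff a n m * s ^ (2 * m)

lemma FF_rec (a s : ℝ) (n : ℕ) :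
    FF a s (n + 1) = (2 * n + a + 1) * (∑ m ∈ Finset.range (n + 1), qq a n m * s ^ (2 * m))
      + FF a s n - s ^ 2 * FF a s n := by
  have h1 : FF a s n = ∑ m ∈ Finset.range (n + 1), ff a n m * s ^ (2 * m) := by
    rw [Finset.sum_range_succ, ff, qq_top, FF]; simp
  have h2 : s ^ 2 * FF a s n = ∑ m ∈ Finset.range (n + 1), m * qq a n m * s ^ (2 * m) := by
    rw [Finset.sum_range_succ', FF, Finset.mul_sum]
    simp only [Nat.cast_zero, zero_mul, add_zero]
    apply Finset.sum_congr rfl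
    intro m _
    rw [ff]; push_cast; ring
  rw [h2, h1, FF, Finset.mul_sum, ← Finset.sum_add_distrib, ← Finset.sum_sub_distrib]
  apply Finset.sum_congr rfl
  intro m _
  rw [ff_rec]; ring

open Polynomial in
lemma J_formula (a p : ℝ) (ha : -1 < a) (hp : 0 < p) (n : ℕ) :
    Real.Gamma (n + a + 1) / n.factorial * PhiL a p (X * (lP a n * lP a n)) =
      p ^ (-(2 * n + a + 2)) * (FF a (1 - p) (n + 1) - p ^ 2 * FF a (1 - p) n) := by
  have h1 := (PhiL_deriv a p hp ha (lP a n * lP a n)).const_mul (Real.Gamma (n + a + 1) / n.factorial)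
  have hin : HasDerivAt (fun p : ℝ => ∑ m ∈ Finset.range (n + 1), qq a n m * (1 - p) ^ (2 * m))
      (∑ m ∈ Finset.range (n + 1), qq a n m * (((2 * m : ℕ) : ℝ) * (1 - p) ^ (2 * m - 1) * (-1))) p := by
    apply HasDerivAt.fun_sum
    intro m _
    apply HasDerivAt.const_mul
    exact ((hasDerivAt_id p).const_sub 1).pow (2 * m)
  have h2 := (Real.hasDerivAt_rpow_const (p := -(2 * (n:ℝ) + a + 1)) (Or.inl hp.ne')).fun_mul hin
  have h3 : (fun p => Real.Gamma (n + a + 1) / n.factorial * PhiL a p (lP a n * lP a n)) =ᶠ[nhds p]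
      (fun p => p ^ (-(2 * (n:ℝ) + a + 1)) * ∑ m ∈ Finset.range (n + 1), qq a n m * (1 - p) ^ (2 * m)) := by
    filter_upwards [lt_mem_nhds hp] with q hq using G2 a q ha hq n
  have h4 := h1.unique (h2.congr_of_eventuallyEq h3)
  have h5 : (∑ m ∈ Finset.range (n + 1), qq a n m * (((2 * m : ℕ) : ℝ) * (1 - p) ^ (2 * m - 1) * (-1)))
      = -2 * (1 - p) * FF a (1 - p) n := by
    rw [Finset.sum_range_succ', FF, Finset.mul_sum]
    simp only [Nat.cast_zero, mul_zero, zero_mul, add_zero]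
    apply Finset.sum_congr rfl
    intro m _
    rw [ff, show 2 * (m + 1) - 1 = 2 * m + 1 by omega]; push_cast; ring
  rw [h5] at h4
  rw [FF_rec]
  have e : p ^ (-(2 * (n:ℝ) + a + 1)) = p ^ (-(2 * (n:ℝ) + a + 2)) * p := by
    rw [← Real.rpow_add_one hp.ne']; congr 1; ring
  rw [e, show -(2 * (n:ℝ) + a + 1) - 1 = -(2 * n + a + 2) by ring] at h4
  linear_combination -h4

open Polynomial in
lemma sum_formula (a p : ℝ) (ha : -1 < a) (hp : 0 < p) (N : ℕ) :
    ∑ n ∈ Finset.range N, Real.Gamma (n + a + 1) / n.factorial * PhiL a p (X * (lP a n * lP a n)) =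
      p ^ (-(2 * N + a)) * FF a (1 - p) N := by
  induction N with
  | zero => simp [FF]
  | succ N ih =>
    rw [Finset.sum_range_succ, ih, J_formula a p ha hp]
    have e : p ^ (-(2 * (N:ℝ) + a)) = p ^ (-(2 * (N:ℝ) + a + 2)) * p ^ 2 := by
      rw [← Real.rpow_natCast, ← Real.rpow_add hp]; congr 1; push_cast; ring
    rw [e]
    push_cast
    rw [show 2 * ((N:ℝ) + 1) + a = 2 * N + a + 2 by ring]
    ring

lemma poch_desc (x : ℝ) (m : ℕ) :
    x * poch (1 - x) m = (-1) ^ m * (descPochhammer ℝ (m + 1)).eval x := by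
  induction m with
  | zero => simp [poch]
  | succ m ih =>
    rw [poch, Finset.prod_range_succ, ← poch, ← mul_assoc, ih, descPochhammer_succ_eval (m + 1)]
    push_cast; ring

lemma poch_two (m : ℕ) : poch 2 m = (m + 1).factorial := by
  induction m with
  | zero => simp [poch]
  | succ m ih =>
    rw [poch, Finset.prod_range_succ, ← poch, ih, Nat.factorial_succ (m + 1)]
    push_cast; ring

lemma hyp_eq (a s : ℝ) (N : ℕ) (hN : 1 ≤ N) :
    N * (N + a) * hypF (N - 1) (-(N : ℝ) + 1 - a) 2 (s ^ 2) = FF a s N := by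
  obtain ⟨M, rfl⟩ := Nat.exists_eq_add_of_le' hN
  rw [hypF, FF, Nat.add_sub_cancel, Finset.mul_sum]
  apply Finset.sum_congr rfl
  intro m _
  have h1 := poch_desc ((M + 1 : ℕ) : ℝ) m
  have h2 := poch_desc (((M + 1 : ℕ) : ℝ) + a) m
  rw [show 1 - (((M + 1 : ℕ) : ℝ)) = -(M:ℝ) by push_cast; ring] at h1
  rw [show 1 - (((M + 1 : ℕ) : ℝ) + a) = -((M + 1 : ℕ) : ℝ) + 1 - a by ring] at h2
  have e : (-1 : ℝ) ^ m * (-1) ^ m = 1 := by rw [← mul_pow]; simp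
  have h5 : (m.factorial : ℝ) ≠ 0 := by exact_mod_cast m.factorial_ne_zero
  have h6 : (m : ℝ) + 1 ≠ 0 := by positivity
  rw [poch_two, ff, qq, ← pow_mul]
  set A := (descPochhammer ℝ (m + 1)).eval ((M + 1 : ℕ) : ℝ)
  set B := (descPochhammer ℝ (m + 1)).eval (((M + 1 : ℕ) : ℝ) + a)
  have h7 : ((M + 1 : ℕ) : ℝ) * (((M + 1 : ℕ) : ℝ) + a) * (poch (-(M:ℝ)) m * poch (-((M + 1 : ℕ) : ℝ) + 1 - a) m) = A * B := by
    linear_combination h1 * (((M + 1 : ℕ) : ℝ) + a) * poch (-((M + 1 : ℕ) : ℝ) + 1 - a) m + (-1) ^ m * A * h2 + A * B * e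
  calc _ = ((M + 1 : ℕ) : ℝ) * (((M + 1 : ℕ) : ℝ) + a) * (poch (-(M:ℝ)) m * poch (-((M + 1 : ℕ) : ℝ) + 1 - a) m) / ((m + 1).factorial * m.factorial) * s ^ (2 * m) := by ring
    _ = _ := by
      rw [h7, Nat.factorial_succ]; push_cast; field_simp

lemma iter_exp_neg (k : ℕ) (x : ℝ) :
    iteratedDeriv k (fun t : ℝ => Real.exp (-t)) x = (-1) ^ k * Real.exp (-x) := by
  have := iteratedDeriv_comp_neg k Real.exp x
  rw [this]
  simp [iteratedDeriv_eq_iterate]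

lemma lagL_eq (a : ℝ) (ha : -1 < a) (n : ℕ) (x : ℝ) (hx : 0 < x) :
    (n.factorial : ℝ) * lagL a n x = Real.Gamma (n + a + 1) * (lP a n).eval x := by
  have h5 : (n.factorial : ℝ) ≠ 0 := by exact_mod_cast n.factorial_ne_zero
  have h := iteratedDeriv_mul (n := n) (x := x) (f := fun t : ℝ => Real.exp (-t))
    (g := fun t : ℝ => t ^ ((n : ℝ) + a)) (by fun_prop)
    (Real.contDiffAt_rpow_const_of_ne hx.ne')
  have h' : iteratedDeriv n (fun t : ℝ => Real.exp (-t) * t ^ ((n : ℝ) + a)) x =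
      Real.exp (-x) * x ^ a * (Real.Gamma (n + a + 1) * (lP a n).eval x) := by
    refine h.trans ?_
    rw [lP, Polynomial.eval_finsetSum, Finset.mul_sum, Finset.mul_sum]
    apply Finset.sum_congr rfl
    intro k hk
    have hk : k ≤ n := by simp at hk; omega
    obtain ⟨d, rfl⟩ := Nat.exists_eq_add_of_le hk
    have hk0 : (0:ℝ) ≤ k := Nat.cast_nonneg k
    have hg : Real.Gamma (a + k + 1) ≠ 0 := (Real.Gamma_pos_of_pos (by linarith)).ne'
    rw [iter_exp_neg, iteratedDeriv_eq_iterate, Real.iter_deriv_rpow_const, Nat.add_sub_cancel_left,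
      desc_Gamma a ha k d, show ((k + d : ℕ) : ℝ) + a - d = a + k by push_cast; ring,
      Real.rpow_add hx, Real.rpow_natCast, Polynomial.eval_smul, Polynomial.eval_pow, Polynomial.eval_X,
      smul_eq_mul]
    field_simp
  rw [lagL, h', Real.rpow_neg hx.le, Real.exp_neg]
  have := (Real.rpow_pos_of_pos hx a).ne'
  have := (Real.exp_pos x).ne'
  field_simp

lemma psi_eq (a : ℝ) (ha : -1 < a) (n : ℕ) (x : ℝ) (hx : 0 < x) :
    psiL a n x ^ 2 / hL a n = Real.Gamma (n + a + 1) / n.factorial *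
      (x ^ a * Real.exp (-x) * (lP a n * lP a n).eval x) := by
  have hk0 : (0:ℝ) ≤ n := Nat.cast_nonneg n
  have hg : Real.Gamma (n + a + 1) ≠ 0 := (Real.Gamma_pos_of_pos (by linarith)).ne'
  have h5 : (n.factorial : ℝ) ≠ 0 := by exact_mod_cast n.factorial_ne_zero
  have e : ((-1 : ℝ) ^ n) ^ 2 = 1 := by rw [← pow_mul, mul_comm, pow_mul]; simp
  rw [psiL, hL, Real.Gamma_nat_eq_factorial, mul_pow, Real.sq_sqrt (by positivity),
    mul_right_comm (n.factorial : ℝ), lagL_eq a ha n x hx, mul_pow, e, Polynomial.eval_mul]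
  field_simp

theorem lue_density_laplace_transform (a : ℝ) (ha : -1 < a) (N : ℕ) (hN : 1 ≤ N)
    (s : ℝ) (hs : s < 1) :
    ∫ t in Set.Ioi (0 : ℝ), t * rhoLUE a N t * Real.exp (s * t) =
      (N * (N + a) / (1 - s) ^ (2 * (N : ℝ) + a)) *
        hypF (N - 1) (-(N : ℝ) + 1 - a) 2 (s ^ 2) := by
  have hp : 0 < 1 - s := by linarith
  have h1 : Set.EqOn (fun t : ℝ => t * rhoLUE a N t * Real.exp (s * t))
      (fun t => ∑ n ∈ Finset.range N, Real.Gamma (n + a + 1) / n.factorial *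
        (t ^ a * Real.exp (-((1 - s) * t)) * (Polynomial.X * (lP a n * lP a n)).eval t)) (Set.Ioi 0) := by
    intro t ht
    have ht : 0 < t := ht
    simp only [rhoLUE]
    rw [Finset.mul_sum, Finset.sum_mul]
    apply Finset.sum_congr rfl
    intro n _
    rw [psi_eq a ha n t ht, show -((1 - s) * t) = -t + s * t by ring, Real.exp_add,
      Polynomial.eval_mul (p := Polynomial.X), Polynomial.eval_X]
    ring
  rw [setIntegral_congr_fun measurableSet_Ioi h1, integral_finsetSum]
  · simp only [integral_const_mul]
    rw [Finset.sum_congr rfl (fun n _ => by rw [(PhiL_integral a (1 - s) ha hp _).2]),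
      sum_formula a _ ha hp, sub_sub_cancel, ← hyp_eq a s N hN, Real.rpow_neg hp.le]
    ring
  · intro n _
    exact (PhiL_integral a (1 - s) ha hp _).1.const_mul _
end

section
/- The diagonal Jacobi Christoffel–Darboux kernel with weight x^a(1-x)^b on (0,1) satisfies the differential identity (d/ds)( s(1-s) K_N^{(J)}(s,s) ) = -((2N+a+b)/h_{N-1}^{(J)}) s^a (1-s)^b p_N^{(J)}(s) p_{N-1}^{(J)}(s), where p_n^{(J)} are the monic Jacobi orthogonal polynomials with norms h_n^{(J)}. -/
open Real MeasureTheory Finset Polynomial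

noncomputable def jA (a b : ℝ) (f : ℝ[X]) : ℝ[X] :=
  X * (derivative f) - X * (X * derivative f) + C ((a+1)/2) * f - C ((a+b+2)/2) * (X * f)

lemma jA_coeff (a b : ℝ) (f : ℝ[X]) (k : ℕ) : (jA a b f).coeff (k+1) =
    (k+1) * f.coeff (k+1) - k * f.coeff k + (a+1)/2 * f.coeff (k+1) - (a+b+2)/2 * f.coeff k := by
  unfold jA
  simp only [coeff_add, coeff_sub, coeff_X_mul, coeff_C_mul, coeff_derivative]
  cases k with
  | zero => simp
  | succ k => simp only [coeff_X_mul, coeff_derivative]; push_cast; ring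

lemma jspan (p : ℕ → ℝ[X]) (hmonic : ∀ n, (p n).Monic) (hdeg : ∀ n, (p n).natDegree = n)
    (L : ℝ[X] →ₗ[ℝ] ℝ) (R : ℝ[X]) (n : ℕ) (hR : ∀ k < n, L (R * p k) = 0) :
    ∀ q : ℝ[X], (∀ m, n ≤ m → q.coeff m = 0) → L (R * q) = 0 := by
  induction n with
  | zero =>
    intro q hq
    have : q = 0 := by ext m; simpa using hq m (Nat.zero_le m)
    simp [this]
  | succ n ih =>
    intro q hq
    have h1 := ih (fun k hk => hR k (by omega)) (q - (q.coeff n) • p n) (by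
      intro m hm
      rcases hm.eq_or_lt with rfl | hm
      · have : (p n).coeff n = 1 := by
          have := hmonic n
          rwa [Monic, leadingCoeff, hdeg] at this
        simp [this]
      · have : (p n).coeff m = 0 := coeff_eq_zero_of_natDegree_lt (by rw [hdeg]; exact hm)
        simp [this, hq m hm])
    have h2 := hR n (by omega)
    rw [mul_sub, map_sub, mul_smul_comm, map_smul, h2] at h1
    simpa using h1

lemma jalg (a b : ℝ) (p : ℕ → ℝ[X]) (hmonic : ∀ n, (p n).Monic) (hdeg : ∀ n, (p n).natDegree = n)
    (h : ℕ → ℝ) (L : ℝ[X] →ₗ[ℝ] ℝ) (hpos : ∀ q, L (q * q) = 0 → q = 0)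
    (hanti : ∀ f g, L (jA a b f * g) + L (f * jA a b g) = 0)
    (horth : ∀ m n, L (p m * p n) = if m = n then h n else 0) (N : ℕ) :
    (∑ j ∈ Finset.range (N+1), C (1 / h j) * (2 * p j * jA a b (p j))) =
      C (- (2 * (N+1) + a + b) / h N) * (p (N+1) * p N) := by
  have hne : ∀ n, h n ≠ 0 := by
    intro n hn
    have := hpos (p n) (by rw [horth]; simp [hn])
    exact (hmonic n).ne_zero this
  have c1 : ∀ n, (p n).coeff n = 1 := by
    intro n
    have := hmonic n
    rwa [Monic, leadingCoeff, hdeg] at this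
  have c0 : ∀ n m, n < m → (p n).coeff m = 0 := fun n m hm =>
    coeff_eq_zero_of_natDegree_lt (by rw [hdeg]; exact hm)
  obtain ⟨α, hα⟩ : ∃ α : ℕ → ℝ, ∀ j, α j = -(j + (a+b+2)/2) := ⟨_, fun j => rfl⟩
  have lead : ∀ j m, j + 1 ≤ m → (jA a b (p j) - α j • p (j+1)).coeff m = 0 := by
    intro j m hm
    obtain ⟨k, rfl⟩ : ∃ k, m = k + 1 := ⟨m - 1, by omega⟩
    rw [coeff_sub, coeff_smul, jA_coeff, c0 j (k+1) (by omega)]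
    rcases (show j ≤ k by omega).eq_or_lt with rfl | hk
    · rw [c1, c1, hα, smul_eq_mul]; ring
    · rw [c0 j k hk, c0 (j+1) (k+1) (by omega)]; simp
  have orthlow : ∀ n q, (∀ m, n ≤ m → q.coeff m = 0) → L (p n * q) = 0 := by
    intro n q hq
    exact jspan p hmonic hdeg L (p n) n (fun k hk => by rw [horth, if_neg (by omega)]) q hq
  have hself : ∀ j, L (jA a b (p j) * p j) = 0 := by
    intro j
    have := hanti (p j) (p j)
    rw [mul_comm (p j)] at this
    linarith
  have hup : ∀ j, L (p (j+1) * jA a b (p j)) = α j * h (j+1) := by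
    intro j
    have := orthlow (j+1) _ (lead j)
    rw [mul_sub, map_sub, mul_smul_comm, map_smul, horth] at this
    simp at this
    linarith
  have zero : ∀ n R, (∀ m, n ≤ m → R.coeff m = 0) → (∀ k < n, L (R * p k) = 0) → R = 0 := by
    intro n R h1 h2
    exact hpos R (jspan p hmonic hdeg L R n h2 R h1)
  have r0 : jA a b (p 0) = α 0 • p 1 := by
    refine sub_eq_zero.1 (zero 1 _ (lead 0) ?_)
    intro k hk
    obtain rfl : k = 0 := by omega
    rw [sub_mul, map_sub, hself, smul_mul_assoc, map_smul, horth]; simp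
  have r1 : ∀ j, jA a b (p (j+1)) = α (j+1) • p (j+2) - (α j * h (j+1) / h j) • p j := by
    intro j
    have : jA a b (p (j+1)) - α (j+1) • p (j+2) + (α j * h (j+1) / h j) • p j = 0 := by
      refine zero (j+2) _ ?_ ?_
      · intro m hm
        rw [coeff_add, lead (j+1) m hm, coeff_smul, c0 j m (by omega)]; simp
      · intro k hk
        rw [add_mul, sub_mul, map_add, map_sub, smul_mul_assoc, smul_mul_assoc, map_smul, map_smul,
          horth, horth, if_neg (by omega)]
        rcases (show k = j + 1 ∨ k = j ∨ k < j by omega) with rfl | rfl | hk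
        · rw [hself]; simp
        · have := hanti (p (k+1)) (p k)
          rw [hup] at this
          simp only [if_true, smul_eq_mul]
          have e : α k * h (k+1) / h k * h k = α k * h (k+1) := by field_simp [hne k]
          rw [e]; linarith
        · have := hanti (p (j+1)) (p k)
          rw [orthlow (j+1) (jA a b (p k))] at this
          · rw [if_neg (by omega)]; simp; linarith
          · intro m hm
            have := lead k m (by omega)
            rwa [coeff_sub, coeff_smul, c0 (k+1) m (by omega), smul_zero, sub_zero] at this
    linear_combination (exp := 1) this
  have main : ∀ N, (∑ j ∈ Finset.range (N+1), C (1 / h j) * (2 * p j * jA a b (p j))) =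
      C (2 * α N / h N) * (p (N+1) * p N) := by
    intro N
    induction N with
    | zero =>
      simp only [zero_add, Finset.sum_range_one, r0, smul_eq_C_mul]
      have : C (2 * α 0 / h 0) = 2 * C (α 0) * C (1 / h 0) := by
        rw [div_eq_mul_one_div, C_mul, C_mul]; rfl
      rw [this]; ring
    | succ N ih =>
      rw [Finset.sum_range_succ, ih, r1, smul_eq_C_mul, smul_eq_C_mul]
      have e1 : C (2 * α (N+1) / h (N+1)) = 2 * C (α (N+1)) * C (1 / h (N+1)) := by
        rw [div_eq_mul_one_div, C_mul, C_mul]; rfl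
      have e2 : C (2 * α N / h N) = 2 * C (1 / h (N+1)) * C (α N * h (N+1) / h N) := by
        rw [show (2 : ℝ[X]) = C 2 from rfl, ← C_mul, ← C_mul]
        congr 1
        field_simp [hne N, hne (N+1)]
      rw [e1, e2]; ring
  rw [main, hα]
  congr 3
  ring

noncomputable def jD (a b : ℝ) (f : ℝ[X]) : ℝ[X] :=
  X * (derivative f) - X * (X * derivative f) + C (a+1) * f - C (a+b+2) * (X * f)

lemma jD_mul (a b : ℝ) (f g : ℝ[X]) : jA a b f * g + f * jA a b g = jD a b (f * g) := by
  have e1 : C (a+1) = 2 * C ((a+1)/2) := by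
    rw [show (2 : ℝ[X]) = C 2 from rfl, ← C_mul]; congr 1; ring
  have e2 : C (a+b+2) = 2 * C ((a+b+2)/2) := by
    rw [show (2 : ℝ[X]) = C 2 from rfl, ← C_mul]; congr 1; ring
  rw [jD, jA, jA, e1, e2, derivative_mul]; ring

lemma jD_sum (a b : ℝ) (h : ℕ → ℝ) (p : ℕ → ℝ[X]) (s : Finset ℕ) :
    jD a b (∑ j ∈ s, C (1 / h j) * (p j * p j)) =
      ∑ j ∈ s, C (1 / h j) * (2 * p j * jA a b (p j)) := by
  have : ∀ j, C (1 / h j) * (2 * p j * jA a b (p j)) = jD a b (C (1 / h j) * (p j * p j)) := by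
    intro j
    have h1 := jD_mul a b (p j) (p j)
    have h2 : jD a b (C (1 / h j) * (p j * p j)) = C (1 / h j) * jD a b (p j * p j) := by
      rw [jD, jD, derivative_C_mul]; ring
    rw [h2, ← h1]; ring
  simp_rw [this]
  simp only [jD, derivative_sum, Finset.mul_sum, Finset.sum_sub_distrib, Finset.sum_add_distrib]

lemma jderiv (a b : ℝ) (f : ℝ[X]) (x : ℝ) (hx : x ∈ Set.Ioo (0:ℝ) 1) :
    HasDerivAt (fun x => x ^ (a+1) * (1-x) ^ (b+1) * f.eval x)
      (x ^ a * (1-x) ^ b * (jD a b f).eval x) x := by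
  have hx0 : 0 < x := hx.1
  have hx1 : 0 < 1 - x := sub_pos.2 hx.2
  have h1 : HasDerivAt (fun x : ℝ => x ^ (a+1)) ((a+1) * x ^ a) x := by
    have := Real.hasDerivAt_rpow_const (x := x) (p := a+1) (Or.inl hx0.ne')
    simpa using this
  have h2 : HasDerivAt (fun x : ℝ => (1-x) ^ (b+1)) (-((b+1) * (1-x) ^ b)) x := by
    have := ((hasDerivAt_id x).const_sub 1).rpow_const (p := b+1) (Or.inl hx1.ne')
    refine HasDerivAt.congr_deriv (f := fun x : ℝ => (1-x) ^ (b+1)) this ?_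
    simp only [id, add_sub_cancel_right]; ring
  refine ((h1.fun_mul h2).fun_mul (f.hasDerivAt x)).congr_deriv ?_
  simp only [jD, eval_sub, eval_add, eval_mul, eval_X, eval_C]
  rw [Real.rpow_add_one hx0.ne', Real.rpow_add_one hx1.ne']
  ring

lemma jint (a b : ℝ) (ha : -1 < a) (hb : -1 < b) (f : ℝ[X]) :
    IntervalIntegrable (fun x => x ^ a * (1-x) ^ b * f.eval x) volume 0 1 := by
  refine IntervalIntegrable.mul_continuousOn ?_ f.continuous.continuousOn
  have key : ∀ a b : ℝ, -1 < a →
      IntervalIntegrable (fun x : ℝ => x ^ a * (1-x) ^ b) volume 0 (1/2) := by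
    intro a b ha
    refine (intervalIntegral.intervalIntegrable_rpow' ha).mul_continuousOn ?_
    intro x hx
    rw [Set.uIcc_of_le (by norm_num)] at hx
    have : 1 - x ≠ 0 := by linarith [hx.2]
    exact ((continuousAt_const.sub continuousAt_id).rpow_const (Or.inl this)).continuousWithinAt
  refine (key a b ha).trans ?_
  have := ((key b a hb).comp_sub_left 1).symm
  norm_num at this
  refine this.congr ?_
  intro x _
  simp [mul_comm]

lemma jintOn (a b : ℝ) (ha : -1 < a) (hb : -1 < b) (f : ℝ[X]) :
    IntegrableOn (fun x => x ^ a * (1-x) ^ b * f.eval x) (Set.Ioo 0 1) volume :=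
  (intervalIntegrable_iff_integrableOn_Ioo_of_le zero_le_one).1 (jint a b ha hb f)

lemma jzero (a b : ℝ) (ha : -1 < a) (hb : -1 < b) (f : ℝ[X]) :
    ∫ x in Set.Ioo (0:ℝ) 1, x ^ a * (1-x) ^ b * (jD a b f).eval x = 0 := by
  rw [← integral_Ioc_eq_integral_Ioo, ← intervalIntegral.integral_of_le zero_le_one]
  rw [intervalIntegral.integral_eq_sub_of_hasDerivAt_of_le zero_le_one (f := fun x =>
    x ^ (a+1) * (1-x) ^ (b+1) * f.eval x) ?_ (fun x hx => jderiv a b f x hx)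
    (jint a b ha hb _)]
  · have h1 : a + 1 ≠ 0 := by linarith
    have h2 : b + 1 ≠ 0 := by linarith
    simp [Real.zero_rpow h1, Real.zero_rpow h2]
  · apply Continuous.continuousOn
    have h1 : 0 ≤ a + 1 := by linarith
    have h2 : 0 ≤ b + 1 := by linarith
    exact ((continuous_id.rpow_const (fun _ => Or.inr h1)).mul
      ((continuous_const.sub continuous_id).rpow_const (fun _ => Or.inr h2))).mul f.continuous

noncomputable def jL (a b : ℝ) (ha : -1 < a) (hb : -1 < b) : ℝ[X] →ₗ[ℝ] ℝ where
  toFun f := ∫ x in Set.Ioo (0:ℝ) 1, x ^ a * (1-x) ^ b * f.eval x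
  map_add' f g := by
    rw [← integral_add (jintOn a b ha hb f) (jintOn a b ha hb g)]
    congr 1; ext x; rw [eval_add]; ring
  map_smul' c f := by
    rw [RingHom.id_apply, smul_eq_mul, ← integral_const_mul]
    congr 1; ext x; rw [eval_smul, smul_eq_mul]; ring

lemma jpos (a b : ℝ) (ha : -1 < a) (hb : -1 < b) (q : ℝ[X]) (hq : jL a b ha hb (q * q) = 0) :
    q = 0 := by
  change ∫ x in Set.Ioo (0:ℝ) 1, x ^ a * (1-x) ^ b * (q * q).eval x = 0 at hq
  have hp : ∀ x ∈ Set.Ioo (0:ℝ) 1, 0 < x ^ a * (1-x) ^ b := fun x hx =>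
    mul_pos (Real.rpow_pos_of_pos hx.1 _) (Real.rpow_pos_of_pos (sub_pos.2 hx.2) _)
  rw [setIntegral_eq_zero_iff_of_nonneg_ae ?_ (jintOn a b ha hb _)] at hq
  · have := Measure.eqOn_open_of_ae_eq hq isOpen_Ioo ?_ continuousOn_const
    · apply Polynomial.eq_zero_of_infinite_isRoot
      refine (Set.Ioo_infinite (zero_lt_one (α := ℝ))).mono ?_
      intro x hx
      have h1 := this hx
      have h2 := (hp x hx).ne'
      simpa [h2] using h1
    · intro x hx
      have h0 : x ≠ 0 := hx.1.ne'
      have h1 : 1 - x ≠ 0 := (sub_pos.2 hx.2).ne'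
      exact (((continuousAt_id.rpow_const (Or.inl h0)).mul
        ((continuousAt_const.sub continuousAt_id).rpow_const (Or.inl h1))).mul
        (q * q).continuous.continuousAt).continuousWithinAt
  · refine ae_restrict_of_forall_mem measurableSet_Ioo (fun x hx => ?_)
    change 0 ≤ x ^ a * (1-x) ^ b * (q * q).eval x
    rw [eval_mul]
    exact mul_nonneg (hp x hx).le (mul_self_nonneg _)

theorem jacobi_diagonal_kernel_derivative (a b : ℝ) (ha : -1 < a) (hb : -1 < b)
    (p : ℕ → Polynomial ℝ)
    (hmonic : ∀ n, (p n).Monic) (hdeg : ∀ n, (p n).natDegree = n)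
    (h : ℕ → ℝ)
    (horth : ∀ m n, ∫ x in Set.Ioo (0:ℝ) 1,
      x ^ a * (1 - x) ^ b * (p m).eval x * (p n).eval x =
        if m = n then h n else 0)
    (N : ℕ) (hN : 1 ≤ N) (s : ℝ) (hs : s ∈ Set.Ioo (0:ℝ) 1) :
    deriv (fun s' => s' * (1 - s') *
        (s' ^ a * (1 - s') ^ b * ∑ j ∈ Finset.range N, (p j).eval s' ^ 2 / h j)) s =
      -((2 * N + a + b) / h (N - 1)) * s ^ a * (1 - s) ^ b *
        (p N).eval s * (p (N - 1)).eval s := by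
  obtain ⟨n, rfl⟩ : ∃ n, N = n + 1 := ⟨N - 1, by omega⟩
  have key := jalg a b p hmonic hdeg h (jL a b ha hb) (jpos a b ha hb)
    (fun f g => by rw [← map_add, jD_mul]; exact jzero a b ha hb _)
    (fun m n => by
      rw [← horth m n]
      change ∫ x in Set.Ioo (0:ℝ) 1, x ^ a * (1-x) ^ b * (p m * p n).eval x = _
      simp only [eval_mul, mul_assoc]) n
  rw [← jD_sum] at key
  have hd := jderiv a b (∑ j ∈ Finset.range (n+1), C (1 / h j) * (p j * p j)) s hs
  rw [key] at hd
  have he : (fun s' => s' * (1 - s') *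
        (s' ^ a * (1 - s') ^ b * ∑ j ∈ Finset.range (n+1), (p j).eval s' ^ 2 / h j))
      =ᶠ[nhds s] (fun x => x ^ (a+1) * (1-x) ^ (b+1) *
        (∑ j ∈ Finset.range (n+1), C (1 / h j) * (p j * p j)).eval x) := by
    filter_upwards [isOpen_Ioo.mem_nhds hs] with x hx
    have hx0 : x ≠ 0 := hx.1.ne'
    have hx1 : 1 - x ≠ 0 := (sub_pos.2 hx.2).ne'
    have e : (∑ j ∈ Finset.range (n+1), C (1 / h j) * (p j * p j)).eval x =
        ∑ j ∈ Finset.range (n+1), (p j).eval x ^ 2 / h j := by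
      rw [eval_finsetSum]
      refine Finset.sum_congr rfl (fun j _ => ?_)
      simp only [eval_mul, eval_C]; ring
    rw [e, Real.rpow_add_one hx0, Real.rpow_add_one hx1]; ring
  rw [he.deriv_eq, hd.deriv]
  simp only [eval_mul, eval_C, Nat.add_sub_cancel]
  push_cast
  ring
end
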